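/- Let A, B be real symmetric n×n matrices, α₁,...,αₙ the eigenvalues of A with orthonormal eigenvectors ξ₁,...,ξₙ. Let λ be an eigenvalue of B with unit eigenvector v. For each k set η_k := min_{j≠k} |λ − α_j|. Then η_k²·(1 − ⟨v,ξ_k⟩²) ≤ ‖B−A‖_F² for all k, where ‖·‖_F is the Frobenius norm. -/

import Mathlib

open Matrix

/-- Parseval's identity for an orthonormal family of `n` vectors in `ℝⁿ`. -/
lemma sum_sq_dotProduct_of_orthonormal {ι : Type*} [Fintype ι] [DecidableEq ι] {ξ : ι → ι → ℝ}
    (horth : ∀ j k, ξ j ⬝ᵥ ξ k = if j = k then (1 : ℝ) else 0) (w : ι → ℝ) :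
    ∑ j, (ξ j ⬝ᵥ w) ^ 2 = ∑ i, w i ^ 2 := by
  have hQ : Matrix.of ξ * (Matrix.of ξ)ᵀ = 1 := by
    ext j k
    simpa [Matrix.mul_apply, dotProduct, Matrix.one_apply] using horth j k
  have hQ' : (Matrix.of ξ)ᵀ * Matrix.of ξ = 1 := mul_eq_one_comm.mp hQ
  calc ∑ j, (ξ j ⬝ᵥ w) ^ 2 = (Matrix.of ξ *ᵥ w) ⬝ᵥ (Matrix.of ξ *ᵥ w) := by
        simp [dotProduct, mulVec, sq]
    _ = w ⬝ᵥ w := by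
        rw [dotProduct_mulVec, ← mulVec_transpose, mulVec_mulVec, hQ', one_mulVec]
    _ = ∑ i, w i ^ 2 := by simp [dotProduct, sq]

/-- The Euclidean operator norm is bounded by the Frobenius norm. -/
lemma sum_sq_mulVec_le {m ι : Type*} [Fintype m] [Fintype ι] (M : Matrix m ι ℝ) (v : ι → ℝ) :
    ∑ i, (M *ᵥ v) i ^ 2 ≤ (∑ i, ∑ j, M i j ^ 2) * ∑ j, v j ^ 2 := by
  rw [Finset.sum_mul]
  exact Finset.sum_le_sum fun i _ => Finset.sum_mul_sq_le_sq_mul_sq _ (M i) v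

/-- Coordinates of the residual `(B - A) v` along an eigenvector of the symmetric matrix `A`. -/
lemma dotProduct_sub_mulVec_of_eigenvectors {ι : Type*} [Fintype ι] {A B : Matrix ι ι ℝ}
    (hA : A.IsSymm) {x v : ι → ℝ} {a b : ℝ} (hx : A *ᵥ x = a • x) (hv : B *ᵥ v = b • v) :
    x ⬝ᵥ ((B - A) *ᵥ v) = (b - a) * (x ⬝ᵥ v) := by
  rw [sub_mulVec, dotProduct_sub, hv, dotProduct_mulVec x A, ← mulVec_transpose, hA.eq, hx,
    dotProduct_smul, smul_dotProduct, smul_eq_mul, smul_eq_mul, sub_mul]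

/-- Perturbation bound: `η_k²·(1 − ⟨v,ξ_k⟩²) ≤ ‖B−A‖_F²`. -/
theorem stmt_12 (n : ℕ) (hn : 2 ≤ n) (A B : Matrix (Fin n) (Fin n) ℝ)
    (hA : A.IsSymm) (hB : B.IsSymm)
    (α : Fin n → ℝ) (ξ : Fin n → (Fin n → ℝ))
    (heig : ∀ j, A.mulVec (ξ j) = α j • ξ j)
    (horth : ∀ j k, ∑ i, ξ j i * ξ k i = if j = k then (1 : ℝ) else 0)
    (lam : ℝ) (v : Fin n → ℝ)
    (hv : B.mulVec v = lam • v) (hvnorm : ∑ i, v i ^ 2 = 1)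
    (hne : ∀ k : Fin n, (Finset.univ.erase k).Nonempty) :
    ∀ k : Fin n,
      ((Finset.univ.erase k).inf' (hne k) (fun j => |lam - α j|)) ^ 2 *
          (1 - (∑ i, v i * ξ k i) ^ 2) ≤
        ∑ i : Fin n, ∑ j : Fin n, (B - A) i j ^ 2 := by
  intro k
  set η := (Finset.univ.erase k).inf' (hne k) (fun j => |lam - α j|)
  have hη0 : 0 ≤ η := Finset.le_inf' _ _ fun j _ => abs_nonneg _
  have hη : ∀ j ∈ Finset.univ.erase k, η ^ 2 ≤ (lam - α j) ^ 2 := fun j hj => by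
    rw [← sq_abs (lam - α j)]
    exact pow_le_pow_left₀ hη0 (Finset.inf'_le _ hj) 2
  have hcoef : 1 - (∑ i, v i * ξ k i) ^ 2 = ∑ j ∈ Finset.univ.erase k, (ξ j ⬝ᵥ v) ^ 2 := by
    have hk : ∑ i, v i * ξ k i = ξ k ⬝ᵥ v := dotProduct_comm v (ξ k)
    rw [hk, ← hvnorm, ← sum_sq_dotProduct_of_orthonormal horth v,
      ← Finset.add_sum_erase _ _ (Finset.mem_univ k), add_sub_cancel_left]
  calc η ^ 2 * (1 - (∑ i, v i * ξ k i) ^ 2)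
      = ∑ j ∈ Finset.univ.erase k, η ^ 2 * (ξ j ⬝ᵥ v) ^ 2 := by rw [hcoef, Finset.mul_sum]
    _ ≤ ∑ j ∈ Finset.univ.erase k, (ξ j ⬝ᵥ ((B - A) *ᵥ v)) ^ 2 :=
        Finset.sum_le_sum fun j hj => by
          rw [dotProduct_sub_mulVec_of_eigenvectors hA (heig j) hv, mul_pow]
          exact mul_le_mul_of_nonneg_right (hη j hj) (sq_nonneg _)
    _ ≤ ∑ j, (ξ j ⬝ᵥ ((B - A) *ᵥ v)) ^ 2 :=
        Finset.sum_le_sum_of_subset_of_nonneg (Finset.erase_subset _ _) fun _ _ _ => sq_nonneg _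
    _ = ∑ i, ((B - A) *ᵥ v) i ^ 2 := sum_sq_dotProduct_of_orthonormal horth _
    _ ≤ ∑ i : Fin n, ∑ j : Fin n, (B - A) i j ^ 2 := by
        simpa only [hvnorm, mul_one] using sum_sq_mulVec_le (B - A) v
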